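/- The square of the non-incidence matrix B satisfies B² = Φ(N, q^{n-1}, q^{n-2}(q-1)): the diagonal entries of B² equal q^{n-1} and all off-diagonal entries equal q^{n-2}(q-1). -/

import Mathlib

/-!
Let `q = |F|` and `n = dim V`. A vector `w ≠ 0` is a multiple `a • v k` for exactly one unit `a` and
one index `k`, so counting the points off a set of hyperplanes amounts to counting the vectors
off them and dividing by `q - 1`. If `m` hyperplanes are cut out by linearly independent
functionals, these functionals together form a surjection `V → F ^ m`, whose fibres have
`q ^ (n - m)` elements; hence `(q - 1) ^ m * q ^ (n - m)` vectors avoid all of them. The form is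
reflexive, so `B * B = B * Bᵀ`, whose `(i, j)` entry counts the points off the hyperplanes of `v i`
and `v j`: `m = 1` if `i = j`, and `m = 2` otherwise.
-/

open Module Function Matrix
open scoped LinearAlgebra.Projectivization

section Counting

theorem natCard_subtype_comp_addMonoidHom {G H : Type*} [AddGroup G] [AddGroup H] {g : G →+ H}
    (hg : Surjective g) (p : H → Prop) :
    Nat.card {x // p (g x)} = Nat.card {y // p y} * Nat.card g.ker := by
  rw [← Nat.card_prod]
  exact Nat.card_congr <| (Equiv.sigmaSubtypeFiberEquivSubtype g fun _ ↦ Iff.rfl).symm.trans <|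
    Equiv.sigmaEquivProdOfEquiv fun y ↦ AddMonoidHom.fiberEquivKerOfSurjective hg y

theorem natCard_pi_ne_zero (κ F : Type*) [Fintype κ] [GroupWithZero F] :
    Nat.card {y : κ → F // ∀ a, y a ≠ 0} = (Nat.card F - 1) ^ Fintype.card κ := by
  rw [Nat.card_congr (Equiv.subtypePiEquivPi (p := fun _ : κ ↦ (· ≠ (0 : F)))), Nat.card_pi,
    Finset.prod_const, Finset.card_univ, ← Nat.card_congr unitsEquivNeZero, Nat.card_units]

variable {F V κ : Type*} [Field F] [AddCommGroup V] [Module F V] {f : κ → Dual F V}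

theorem pi_surjective_of_linearIndependent [Finite κ] (hf : LinearIndependent F f) :
    Surjective (LinearMap.pi f) := by
  classical
  have := Fintype.ofFinite κ
  rw [← LinearMap.dualMap_injective_iff, injective_iff_map_eq_zero]
  intro φ hφ
  have relation : ∑ a, φ (Pi.single a 1) • f a = 0 := by
    ext w
    have hw : φ (LinearMap.pi f w) = 0 := LinearMap.congr_fun hφ w
    simpa [mul_comm] using (congrArg φ ((Pi.basisFun F κ).sum_repr (LinearMap.pi f w))).trans hw
  ext a
  simpa using Fintype.linearIndependent_iff.1 hf _ relation a

theorem natCard_forall_apply_ne_zero [Finite F] [FiniteDimensional F V] [Fintype κ]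
    (hf : LinearIndependent F f) :
    Nat.card {w : V // ∀ a, f a w ≠ 0} =
      (Nat.card F - 1) ^ Fintype.card κ * Nat.card F ^ (finrank F V - Fintype.card κ) := by
  have hsurj := pi_surjective_of_linearIndependent hf
  have hker : finrank F (LinearMap.pi f).ker = finrank F V - Fintype.card κ := by
    rw [← (LinearMap.pi f).finrank_range_add_finrank_ker, LinearMap.range_eq_top.2 hsurj,
      finrank_top, finrank_fintype_fun_eq_card, Nat.add_sub_cancel_left]
  rw [← hker, ← natCard_eq_pow_finrank, ← natCard_pi_ne_zero]
  exact natCard_subtype_comp_addMonoidHom (g := (LinearMap.pi f).toAddMonoidHom) hsurj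
    fun y ↦ ∀ a, y a ≠ 0

end Counting

section PointRepresentatives

variable {F V ι : Type*}

theorem natCard_subtype_eq_natCard_units_mul [DivisionRing F] [AddCommGroup V] [Module F V]
    {v : ι → V} {hv0 : ∀ i, v i ≠ 0}
    (hv : Bijective fun i ↦ Projectivization.mk F (v i) (hv0 i)) {p : V → Prop}
    (hp0 : ¬ p 0) (hp : ∀ (a : Fˣ) w, p (a • w) ↔ p w) :
    Nat.card {w // p w} = Nat.card Fˣ * Nat.card {i // p (v i)} := by
  let scale : Fˣ × {i // p (v i)} → {w // p w} := fun x ↦ ⟨x.1 • v x.2, (hp _ _).2 x.2.2⟩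
  have scale_injective : Injective scale := by
    rintro ⟨a, i, hi⟩ ⟨b, j, hj⟩ h
    have hab : a • v i = b • v j := congrArg Subtype.val h
    obtain rfl : i = j := hv.1 <| (Projectivization.mk_eq_mk_iff F _ _ (hv0 i) (hv0 j)).2
      ⟨a⁻¹ * b, by rw [mul_smul, ← hab, inv_smul_smul]⟩
    obtain rfl : a = b := Units.ext (smul_left_injective F (hv0 i) hab)
    rfl
  have scale_surjective : Surjective scale := by
    rintro ⟨w, hw⟩
    have hw0 : w ≠ 0 := fun h ↦ hp0 (h ▸ hw)
    obtain ⟨i, hi⟩ := hv.2 (.mk F w hw0)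
    obtain ⟨a, rfl⟩ := (Projectivization.mk_eq_mk_iff F _ _ hw0 (hv0 i)).1 hi.symm
    exact ⟨⟨a, i, (hp _ _).1 hw⟩, rfl⟩
  rw [← Nat.card_prod, Nat.card_eq_of_bijective scale ⟨scale_injective, scale_surjective⟩]

variable [Field F] [AddCommGroup V] [Module F V] {v : ι → V} {hv0 : ∀ i, v i ≠ 0}

theorem natCard_points_forall_apply_ne_zero [Finite F] [FiniteDimensional F V] {κ : Type*}
    [Fintype κ] [Nonempty κ] (hv : Bijective fun i ↦ Projectivization.mk F (v i) (hv0 i))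
    {f : κ → Dual F V} (hf : LinearIndependent F f) :
    Nat.card {i // ∀ a, f a (v i) ≠ 0} =
      Nat.card F ^ (finrank F V - Fintype.card κ) * (Nat.card F - 1) ^ (Fintype.card κ - 1) := by
  have hvectors := natCard_subtype_eq_natCard_units_mul hv (p := fun w ↦ ∀ a, f a w ≠ 0)
    (by simp) (by simp [Units.smul_def])
  rw [natCard_forall_apply_ne_zero hf, Nat.card_units,
    ← mul_pow_sub_one (Fintype.card_ne_zero (α := κ)), mul_assoc] at hvectors
  have hq : 0 < Nat.card F - 1 := Nat.sub_pos_of_lt Finite.one_lt_card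
  rw [← Nat.eq_of_mul_eq_mul_left hq hvectors, mul_comm]

theorem bijective_mk_of_span
    (hinj : ∀ i j, Submodule.span F {v i} = Submodule.span F {v j} → i = j)
    (hcov : ∀ w : V, w ≠ 0 → ∃ i, w ∈ Submodule.span F {v i}) :
    Bijective fun i ↦ Projectivization.mk F (v i) (hv0 i) := by
  refine ⟨fun i j h ↦ hinj i j ?_, fun P ↦ ?_⟩
  · simpa only [Projectivization.submodule_mk] using congrArg Projectivization.submodule h
  · induction P with | h w hw =>
    obtain ⟨i, hi⟩ := hcov w hw
    obtain ⟨a, ha⟩ := Submodule.mem_span_singleton.1 hi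
    exact ⟨i, ((Projectivization.mk_eq_mk_iff' F _ _ hw (hv0 i)).2 ⟨a, ha⟩).symm⟩

end PointRepresentatives

section NonincidenceMatrix

variable {F V ι : Type*} [Field F] [AddCommGroup V] [Module F V]

open scoped Classical in
/-- The non-incidence matrix, over `R`, of the points spanned by the vectors `v j` and the
hyperplanes `(v i)^⊥` with respect to the bilinear form `b`; the rows are indexed by the
hyperplanes. -/
noncomputable def nonincidenceMatrix (R : Type*) [Zero R] [One R] (b : LinearMap.BilinForm F V)
    (v : ι → V) : Matrix ι ι R :=
  .of fun i j ↦ if b (v i) (v j) = 0 then 0 else 1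

variable (R : Type*) {b : LinearMap.BilinForm F V}

theorem nonincidenceMatrix_isSymm [Zero R] [One R] (hb : b.IsRefl) (v : ι → V) :
    (nonincidenceMatrix R b v).IsSymm := by
  ext i j
  classical
  exact if_congr hb.eq_iff rfl rfl

variable [NonAssocSemiring R] [Fintype ι]

theorem nonincidenceMatrix_mul_transpose_apply (v : ι → V) (i j : ι) :
    (nonincidenceMatrix R b v * (nonincidenceMatrix R b v)ᵀ) i j =
      (Nat.card {k // b (v i) (v k) ≠ 0 ∧ b (v j) (v k) ≠ 0} : R) := by
  classical
  simp only [mul_apply, nonincidenceMatrix, transpose_apply, of_apply, Nat.card_eq_fintype_card,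
    Fintype.card_subtype, Finset.natCast_card_filter, ite_and, ne_eq, ite_not, ite_mul, zero_mul,
    one_mul]

variable [Finite F] [DecidableEq ι] {v : ι → V} {hv0 : ∀ i, v i ≠ 0}

theorem nonincidenceMatrix_mul_transpose (hb : b.SeparatingLeft)
    (hv : Bijective fun i ↦ Projectivization.mk F (v i) (hv0 i)) :
    nonincidenceMatrix R b v * (nonincidenceMatrix R b v)ᵀ =
      .of fun i j ↦ if i = j then ((Nat.card F ^ (finrank F V - 1) : ℕ) : R)
        else ((Nat.card F ^ (finrank F V - 2) * (Nat.card F - 1) : ℕ) : R) := by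
  have : Finite V :=
    (Projectivization.finite_iff_of_finite F V).1 (Finite.of_surjective _ hv.surjective)
  have hker : LinearMap.ker b = ⊥ := LinearMap.separatingLeft_iff_ker_eq_bot.1 hb
  ext i j
  rw [nonincidenceMatrix_mul_transpose_apply, of_apply]
  split_ifs with hij
  · subst hij
    have hf : LinearIndependent F (b ∘ ![v i]) :=
      (linearIndependent_unique_iff.2 (hv0 i)).map' b hker
    simpa using congrArg (Nat.cast (R := R)) (natCard_points_forall_apply_ne_zero hv hf)
  · have hpair : LinearIndependent F ![v i, v j] :=
      (Projectivization.independent_mk_iff_LinearIndependent (hv0 i) (hv0 j)).1 <|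
        (Projectivization.independent_pair_iff_ne _ _).2 (hv.injective.ne hij)
    have hf : LinearIndependent F (b ∘ ![v i, v j]) := hpair.map' b hker
    simpa using congrArg (Nat.cast (R := R)) (natCard_points_forall_apply_ne_zero hv hf)

theorem nonincidence_sq_general (hb : b.SeparatingLeft) (hrefl : b.IsRefl)
    (hv : Bijective fun i ↦ Projectivization.mk F (v i) (hv0 i)) :
    nonincidenceMatrix R b v * nonincidenceMatrix R b v =
      .of fun i j ↦ if i = j then ((Nat.card F ^ (finrank F V - 1) : ℕ) : R)
        else ((Nat.card F ^ (finrank F V - 2) * (Nat.card F - 1) : ℕ) : R) := by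
  simpa only [(nonincidenceMatrix_isSymm R hrefl v).eq] using
    nonincidenceMatrix_mul_transpose R hb hv

end NonincidenceMatrix

theorem dotProductBilin_separatingLeft (F m : Type*) [CommSemiring F] [Fintype m] :
    (dotProductBilin F F : LinearMap.BilinForm F (m → F)).SeparatingLeft :=
  fun x hx ↦ dotProduct_eq_zero x hx

theorem dotProductBilin_isRefl (F m : Type*) [CommSemiring F] [Fintype m] :
    (dotProductBilin F F : LinearMap.BilinForm F (m → F)).IsRefl :=
  fun x y h ↦ (dotProduct_comm y x).trans h

theorem nonincidence_sq (q n N : ℕ) (hq : 2 ≤ q) (hn : 2 ≤ n)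
    (F : Type*) [Field F] [Fintype F] [DecidableEq F] (hF : Fintype.card F = q)
    (hN : N = (q ^ n - 1) / (q - 1))
    (v : Fin N → (Fin n → F))
    (hv0 : ∀ i, v i ≠ 0)
    (hvinj : ∀ i j, Submodule.span F {v i} = Submodule.span F {v j} → i = j)
    (hvcov : ∀ w : Fin n → F, w ≠ 0 → ∃ i, w ∈ Submodule.span F {v i})
    (A : Matrix (Fin N) (Fin N) ℤ)
    (hA : ∀ i j, A i j = if ∑ k, v i k * v j k = 0 then 1 else 0)
    (B : Matrix (Fin N) (Fin N) ℤ) (hB : ∀ i j, B i j = 1 - A i j):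
    ∀ i j : Fin N, (B * B) i j = if i = j then ((q ^ (n - 1) : ℕ) : ℤ) else ((q ^ (n - 2) * (q - 1) : ℕ) : ℤ) := by
  obtain rfl : B = nonincidenceMatrix ℤ (dotProductBilin F F) v := by
    ext i j
    simp [hB, hA, nonincidenceMatrix, dotProduct, sub_ite]
  intro i j
  rw [nonincidence_sq_general ℤ (dotProductBilin_separatingLeft F (Fin n))
    (dotProductBilin_isRefl F (Fin n)) (bijective_mk_of_span (hv0 := hv0) hvinj hvcov)]
  simp [hF]
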